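/- arXiv:1903.03812 — 2 statements merged into one kernel-verified Lean document; each statement's English description precedes it below -/
import Mathlib

section
/- Let 0 < w ≤ w*, let Q : S×A → ℝ be a fixed point of the Q-Bellman operator H (H Q = Q), and let Q' : S×A → ℝ be a fixed point of H_w (H_w Q' = Q'). Then the SOR Q-values recover the optimal value function: max_{a∈A} Q'(i,a) = max_{a∈A} Q(i,a) for every i ∈ S. -/
open Finset

/-- Maximum of a real-valued function over a nonempty finite type. -/
noncomputable def fmax {A : Type*} [Fintype A] [Nonempty A] (f : A → ℝ) : ℝ :=
  Finset.univ.sup' Finset.univ_nonempty f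

/-- Sup (maximum-absolute-value) norm of a real-valued function on a nonempty finite type. -/
noncomputable def supNorm {I : Type*} [Fintype I] [Nonempty I] (f : I → ℝ) : ℝ :=
  fmax (fun i => |f i|)

/-- The over-relaxation bound `w* = min_{(i,a)} 1/(1 - α p(i|i,a))`. -/
noncomputable def wstar {S A : Type*} [Fintype S] [Fintype A] [Nonempty S] [Nonempty A]
    (p : S → A → S → ℝ) (α : ℝ) : ℝ :=
  Finset.univ.inf' Finset.univ_nonempty (fun ia : S × A => 1 / (1 - α * p ia.1 ia.2 ia.1))

/-- The SOR Q-Bellman operator `H_w`. -/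
noncomputable def Hw {S A : Type*} [Fintype S] [Fintype A] [Nonempty S] [Nonempty A]
    (p : S → A → S → ℝ) (r : S → A → ℝ) (α w : ℝ) (Q : S → A → ℝ) : S → A → ℝ :=
  fun i a => w * (r i a + α * ∑ j, p i a j * fmax (Q j)) + (1 - w) * fmax (Q i)

/-- The standard Q-Bellman operator `H`. -/
noncomputable def Hop {S A : Type*} [Fintype S] [Fintype A] [Nonempty S] [Nonempty A]
    (p : S → A → S → ℝ) (r : S → A → ℝ) (α : ℝ) (Q : S → A → ℝ) : S → A → ℝ :=
  fun i a => r i a + α * ∑ j, p i a j * fmax (Q j)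

/-!
Since `w > 0`, taking the maximum over actions in `H_w Q' = Q'` commutes with the affine relaxation
`x ↦ w x + (1 - w) V i`, so `V i = max_a Q'(i, a)` satisfies `V = w (B V) + (1 - w) V` for the
Bellman operator `B` on value functions, that is, `B V = V`. The case `w = 1` is that of `H`. It
remains to see that `B` has at most one fixed point: along a policy greedy for `V`, the difference
of two fixed points `V - U` is dominated by its image under a nonnegative matrix with row sums below
one, and evaluating at a state where the difference is largest shows that it is nonpositive.
-/

theorem nonpos_of_le_mulVec {S R : Type*} [Fintype S] [Semiring R] [LinearOrder R]
    [IsStrictOrderedRing R] {K : Matrix S S R} (hK : ∀ i j, 0 ≤ K i j)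
    (hrow : ∀ i, ∑ j, K i j < 1) {x : S → R} (hx : x ≤ K.mulVec x) : x ≤ 0 := by
  intro i
  have : Nonempty S := ⟨i⟩
  obtain ⟨m, hm⟩ := Finite.exists_max x
  suffices x m ≤ 0 from (hm i).trans this
  by_contra! hpos
  refine lt_irrefl (x m) ?_
  calc x m ≤ ∑ j, K m j * x j := hx m
    _ ≤ ∑ j, K m j * x m := by gcongr with j; exacts [hK m j, hm j]
    _ = (∑ j, K m j) * x m := (sum_mul ..).symm
    _ < 1 * x m := by gcongr; exact hrow m
    _ = x m := one_mul _

section Maximum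

variable {A : Type*} [Fintype A] [Nonempty A]

theorem le_fmax (f : A → ℝ) (a : A) : f a ≤ fmax f :=
  le_sup' f (mem_univ a)

theorem exists_fmax_eq (f : A → ℝ) : ∃ a, fmax f = f a := by
  simpa only [fmax, mem_univ, true_and] using exists_mem_eq_sup' univ_nonempty f

theorem fmax_const_mul_add {c : ℝ} (hc : 0 ≤ c) (f : A → ℝ) (d : ℝ) :
    fmax (fun a ↦ c * f a + d) = c * fmax f + d := by
  have hmono : Monotone fun x : ℝ ↦ c * x + d := fun x y hxy ↦ by dsimp only; gcongr
  exact (apply_sup'_eq_sup'_comp univ_nonempty (fun x ↦ c * x + d) hmono.map_sup).symm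

end Maximum

section BellmanOperator

variable {S A : Type*} [Fintype S]

/-- The one-step lookahead value of taking action `a` in state `i` and continuing with the value
function `V`; the Bellman operators maximize it over `a`. -/
def lookahead (p : S → A → S → ℝ) (r : S → A → ℝ) (α : ℝ) (V : S → ℝ) (i : S) (a : A) : ℝ :=
  r i a + α * ∑ j, p i a j * V j

theorem lookahead_sub_lookahead (p : S → A → S → ℝ) (r : S → A → ℝ) (α : ℝ) (V U : S → ℝ)
    (i : S) (a : A) :
    lookahead p r α V i a - lookahead p r α U i a = ∑ j, α * p i a j * (V j - U j) := by
  simp only [lookahead, mul_sub, sum_sub_distrib, mul_sum, mul_assoc]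
  ring

variable [Fintype A] [Nonempty A]

/-- The Bellman optimality operator on value functions, through which the fixed points of the
operators `Hop` and `Hw` on Q-functions are compared. -/
noncomputable def valueBellman (p : S → A → S → ℝ) (r : S → A → ℝ) (α : ℝ) (V : S → ℝ) : S → ℝ :=
  fun i ↦ fmax (lookahead p r α V i)

variable {p : S → A → S → ℝ} {r : S → A → ℝ} {α : ℝ}

theorem le_of_le_valueBellman_of_valueBellman_le (hp : ∀ i a j, 0 ≤ p i a j) (hα : 0 ≤ α)
    (hrow : ∀ i a, α * ∑ j, p i a j < 1) {V U : S → ℝ} (hV : V ≤ valueBellman p r α V)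
    (hU : valueBellman p r α U ≤ U) : V ≤ U := by
  choose greedy hgreedy using fun i ↦ exists_fmax_eq (lookahead p r α V i)
  let K : Matrix S S ℝ := fun i j ↦ α * p i (greedy i) j
  have hK : ∀ i j, 0 ≤ K i j := fun i j ↦ mul_nonneg hα (hp ..)
  have hKrow : ∀ i, ∑ j, K i j < 1 := fun i ↦ by
    simpa only [K, mul_sum] using hrow i (greedy i)
  refine sub_nonpos.mp (nonpos_of_le_mulVec hK hKrow fun i ↦ ?_)
  calc V i - U i
      ≤ lookahead p r α V i (greedy i) - lookahead p r α U i (greedy i) :=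
        sub_le_sub ((hV i).trans_eq (hgreedy i)) ((le_fmax _ _).trans (hU i))
    _ = K.mulVec (V - U) i := lookahead_sub_lookahead ..

theorem isFixedPt_valueBellman_unique (hp : ∀ i a j, 0 ≤ p i a j) (hα : 0 ≤ α)
    (hrow : ∀ i a, α * ∑ j, p i a j < 1) {V U : S → ℝ}
    (hV : Function.IsFixedPt (valueBellman p r α) V)
    (hU : Function.IsFixedPt (valueBellman p r α) U) : V = U :=
  le_antisymm (le_of_le_valueBellman_of_valueBellman_le hp hα hrow hV.ge hU.le)
    (le_of_le_valueBellman_of_valueBellman_le hp hα hrow hU.ge hV.le)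

end BellmanOperator

section Relaxation

variable {S A : Type*} [Fintype S] [Fintype A] [Nonempty S] [Nonempty A]

theorem Hw_one (p : S → A → S → ℝ) (r : S → A → ℝ) (α : ℝ) : Hw p r α 1 = Hop p r α := by
  ext Q i a
  simp [Hw, Hop]

theorem fmax_Hw (p : S → A → S → ℝ) (r : S → A → ℝ) (α : ℝ) {w : ℝ} (hw : 0 ≤ w)
    (Q : S → A → ℝ) (i : S) :
    fmax (Hw p r α w Q i) =
      w * valueBellman p r α (fun j ↦ fmax (Q j)) i + (1 - w) * fmax (Q i) :=
  fmax_const_mul_add hw _ _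

variable {p : S → A → S → ℝ} {r : S → A → ℝ} {α : ℝ}

theorem isFixedPt_valueBellman_of_isFixedPt_Hw {w : ℝ} (hw : 0 < w) {Q : S → A → ℝ}
    (hQ : Function.IsFixedPt (Hw p r α w) Q) :
    Function.IsFixedPt (valueBellman p r α) (fun i ↦ fmax (Q i)) := by
  funext i
  have hfmax := fmax_Hw p r α hw.le Q i
  rw [hQ.eq] at hfmax
  exact mul_left_cancel₀ hw.ne' (by linarith)

theorem isFixedPt_valueBellman_of_isFixedPt_Hop {Q : S → A → ℝ}
    (hQ : Function.IsFixedPt (Hop p r α) Q) :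
    Function.IsFixedPt (valueBellman p r α) (fun i ↦ fmax (Q i)) :=
  isFixedPt_valueBellman_of_isFixedPt_Hw one_pos (by rwa [Hw_one])

end Relaxation

theorem sor_Q_recovers_value_function_general {S A : Type*} [Fintype S] [Fintype A]
    [Nonempty S] [Nonempty A] {p : S → A → S → ℝ} {r : S → A → ℝ} {α : ℝ}
    (hp : ∀ i a j, 0 ≤ p i a j) (hα : 0 ≤ α) (hrow : ∀ i a, α * ∑ j, p i a j < 1)
    {w : ℝ} (hw : 0 < w) {Q : S → A → ℝ} (hQ : Hop p r α Q = Q)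
    {Q' : S → A → ℝ} (hQ' : Hw p r α w Q' = Q') (i : S) :
    fmax (Q' i) = fmax (Q i) :=
  congrFun (isFixedPt_valueBellman_unique hp hα hrow
    (isFixedPt_valueBellman_of_isFixedPt_Hw hw hQ')
    (isFixedPt_valueBellman_of_isFixedPt_Hop hQ)) i

/-- If `Q` is a fixed point of `H` and `Q'` a fixed point of `H_w`, then the SOR Q-values
recover the optimal value function: `max_a Q'(i,a) = max_a Q(i,a)` for every state `i`. -/
theorem sor_Q_recovers_value_function {S A : Type*} [Fintype S] [Fintype A]
    [Nonempty S] [Nonempty A]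
    (p : S → A → S → ℝ) (r : S → A → ℝ) (α : ℝ)
    (hp : ∀ i a j, 0 ≤ p i a j) (hsum : ∀ i a, ∑ j, p i a j = 1)
    (hα0 : 0 ≤ α) (hα1 : α < 1)
    (w : ℝ) (hw0 : 0 < w) (hw : w ≤ wstar p α)
    (Q : S → A → ℝ) (hQ : Hop p r α Q = Q)
    (Q' : S → A → ℝ) (hQ' : Hw p r α w Q' = Q') :
    ∀ i, fmax (Q' i) = fmax (Q i) :=
  sor_Q_recovers_value_function_general hp hα0 (fun i a ↦ by rwa [hsum, mul_one]) hw0 hQ hQ'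
end

section
/- For every real w with 1 ≤ w ≤ w*, the operator H_w contracts at least as fast as the discount factor: for all P, Q : S×A → ℝ, ‖H_w P − H_w Q‖ ≤ α·‖P − Q‖. -/
open Finset

/-!
`H_w Q (i, a)` equals `w r(i, a) + ∑ j, k(j) max_b Q(j, b)` with weights
`k(j) = w α p(j|i, a) + (1 - w) δ_{ij}`. Only the weight at `j = i` can be negative, and `w ≤ w*`
is exactly what keeps it nonnegative. The weights have total mass at most `1 - w + w α`, and
`Q ↦ max_b Q(j, b)` is nonexpansive, so `H_w` is Lipschitz with constant `1 - w + w α`, which is at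
most `α` once `1 ≤ w` and `α ≤ 1`.
-/

section SupNorm

variable {I : Type*} [Fintype I] [Nonempty I] {f g : I → ℝ} {c : ℝ}

theorem le_fmax_s12 (f : I → ℝ) (i : I) : f i ≤ fmax f :=
  le_sup' f (mem_univ i)

theorem fmax_le (h : ∀ i, f i ≤ c) : fmax f ≤ c :=
  sup'_le _ _ fun i _ => h i

theorem abs_fmax_sub_fmax_le (h : ∀ i, |f i - g i| ≤ c) : |fmax f - fmax g| ≤ c := by
  have fmax_le_add {u v : I → ℝ} (huv : ∀ i, u i - v i ≤ c) : fmax u ≤ c + fmax v :=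
    fmax_le fun i => (sub_le_iff_le_add.1 (huv i)).trans (by gcongr; exact le_fmax_s12 v i)
  exact abs_sub_le_iff.2
    ⟨sub_le_iff_le_add.2 (fmax_le_add fun i => (abs_sub_le_iff.1 (h i)).1),
      sub_le_iff_le_add.2 (fmax_le_add fun i => (abs_sub_le_iff.1 (h i)).2)⟩

theorem abs_le_supNorm (f : I → ℝ) (i : I) : |f i| ≤ supNorm f :=
  le_fmax_s12 (fun i => |f i|) i

theorem supNorm_le (h : ∀ i, |f i| ≤ c) : supNorm f ≤ c :=
  fmax_le h

theorem supNorm_nonneg (f : I → ℝ) : 0 ≤ supNorm f :=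
  (abs_nonneg _).trans (abs_le_supNorm f (Classical.arbitrary I))

end SupNorm

theorem abs_sum_mul_le_sum_mul {ι : Type*} {s : Finset ι} {k d : ι → ℝ} {c : ℝ}
    (hk : ∀ j ∈ s, 0 ≤ k j) (hd : ∀ j ∈ s, |d j| ≤ c) :
    |∑ j ∈ s, k j * d j| ≤ (∑ j ∈ s, k j) * c :=
  calc |∑ j ∈ s, k j * d j|
      ≤ ∑ j ∈ s, |k j * d j| := abs_sum_le_sum_abs _ _
    _ ≤ ∑ j ∈ s, k j * c := sum_le_sum fun j hj => by
        rw [abs_mul, abs_of_nonneg (hk j hj)]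
        exact mul_le_mul_of_nonneg_left (hd j hj) (hk j hj)
    _ = (∑ j ∈ s, k j) * c := (sum_mul _ _ _).symm

theorem mul_lt_one_of_sum_le_one {ι : Type*} {s : Finset ι} {q : ι → ℝ} {α : ℝ}
    (hq : ∀ j ∈ s, 0 ≤ q j) (hsum : ∑ j ∈ s, q j ≤ 1) (hα0 : 0 ≤ α) (hα1 : α < 1)
    {i : ι} (hi : i ∈ s) : α * q i < 1 :=
  mul_lt_one_of_nonneg_of_lt_one_left hα0 hα1 ((single_le_sum hq hi).trans hsum)

/-- The weight of the state value `max_b Q(j, b)` in `H_w Q (i, a)`: the discounted transition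
probability scaled by `w`, plus the relaxation term `1 - w` at `j = i`. -/
noncomputable def sorWeight {S A : Type*} [DecidableEq S] (p : S → A → S → ℝ) (α w : ℝ)
    (i : S) (a : A) (j : S) : ℝ :=
  w * α * p i a j + if j = i then 1 - w else 0

section SorWeight

variable {S A : Type*} [Fintype S] {p : S → A → S → ℝ} {α w : ℝ}

theorem sum_sorWeight [DecidableEq S] (p : S → A → S → ℝ) (α w : ℝ) (i : S) (a : A) :
    ∑ j, sorWeight p α w i a j = 1 - w + w * α * ∑ j, p i a j := by
  simp [sorWeight, sum_add_distrib, mul_sum, add_comm]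

variable [Fintype A] [Nonempty S] [Nonempty A]

theorem Hw_eq_add_sum_sorWeight [DecidableEq S] (p : S → A → S → ℝ) (r : S → A → ℝ) (α w : ℝ)
    (Q : S → A → ℝ) (i : S) (a : A) :
    Hw p r α w Q i a = w * r i a + ∑ j, sorWeight p α w i a j * fmax (Q j) := by
  simp [Hw, sorWeight, add_mul, sum_add_distrib, mul_sum, mul_add, mul_assoc, add_assoc]

theorem mul_one_sub_le_one_of_le_wstar {i : S} {a : A} (hself : α * p i a i < 1)
    (hw : w ≤ wstar p α) : w * (1 - α * p i a i) ≤ 1 :=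
  (le_div_iff₀ (sub_pos.2 hself)).1 <| hw.trans <|
    inf'_le (fun ia : S × A => 1 / (1 - α * p ia.1 ia.2 ia.1)) (mem_univ (i, a))

theorem sorWeight_nonneg [DecidableEq S] {i : S} {a : A} (hp : ∀ j, 0 ≤ p i a j) (hα : 0 ≤ α)
    (hself : α * p i a i < 1) (hw0 : 0 ≤ w) (hw : w ≤ wstar p α) (j : S) :
    0 ≤ sorWeight p α w i a j := by
  unfold sorWeight
  split_ifs with hji
  · subst hji
    linarith [mul_one_sub_le_one_of_le_wstar hself hw]
  · simpa using mul_nonneg (mul_nonneg hw0 hα) (hp j)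

end SorWeight

theorem Hw_contracts_faster_than_alpha_general {S A : Type*} [Fintype S] [Fintype A]
    [Nonempty S] [Nonempty A] {p : S → A → S → ℝ} (r : S → A → ℝ) {α w : ℝ}
    (hp : ∀ i a j, 0 ≤ p i a j) (hsum : ∀ i a, ∑ j, p i a j ≤ 1)
    (hα : 0 ≤ α) (hself : ∀ i a, α * p i a i < 1)
    (hw0 : 0 ≤ w) (hw : w ≤ wstar p α) (P Q : S → A → ℝ) :
    supNorm (fun ia : S × A => Hw p r α w P ia.1 ia.2 - Hw p r α w Q ia.1 ia.2) ≤
      (1 - w + w * α) * supNorm (fun ia : S × A => P ia.1 ia.2 - Q ia.1 ia.2) := by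
  classical
  set N := supNorm (fun ia : S × A => P ia.1 ia.2 - Q ia.1 ia.2)
  have hmax (j : S) : |fmax (P j) - fmax (Q j)| ≤ N :=
    abs_fmax_sub_fmax_le fun b =>
      abs_le_supNorm (fun ia : S × A => P ia.1 ia.2 - Q ia.1 ia.2) (j, b)
  refine supNorm_le fun ⟨i, a⟩ => ?_
  have hmass : ∑ j, sorWeight p α w i a j ≤ 1 - w + w * α := by
    rw [sum_sorWeight]
    linarith [mul_le_of_le_one_right (mul_nonneg hw0 hα) (hsum i a)]
  calc |Hw p r α w P i a - Hw p r α w Q i a|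
      = |∑ j, sorWeight p α w i a j * (fmax (P j) - fmax (Q j))| := by
        simp only [Hw_eq_add_sum_sorWeight, add_sub_add_left_eq_sub, mul_sub, sum_sub_distrib]
    _ ≤ (∑ j, sorWeight p α w i a j) * N :=
        abs_sum_mul_le_sum_mul
          (fun j _ => sorWeight_nonneg (hp i a) hα (hself i a) hw0 hw j) fun j _ => hmax j
    _ ≤ (1 - w + w * α) * N := mul_le_mul_of_nonneg_right hmass (supNorm_nonneg _)

/-- For `1 ≤ w ≤ w*`, the operator `H_w` contracts at least as fast as the discount factor. -/
theorem Hw_contracts_faster_than_alpha {S A : Type*} [Fintype S] [Fintype A]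
    [Nonempty S] [Nonempty A]
    (p : S → A → S → ℝ) (r : S → A → ℝ) (α : ℝ)
    (hp : ∀ i a j, 0 ≤ p i a j) (hsum : ∀ i a, ∑ j, p i a j = 1)
    (hα0 : 0 ≤ α) (hα1 : α < 1)
    (w : ℝ) (hw1 : 1 ≤ w) (hw : w ≤ wstar p α) :
    ∀ P Q : S → A → ℝ,
      supNorm (fun ia : S × A => Hw p r α w P ia.1 ia.2 - Hw p r α w Q ia.1 ia.2) ≤
        α * supNorm (fun ia : S × A => P ia.1 ia.2 - Q ia.1 ia.2) := by
  intro P Q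
  have hself (i : S) (a : A) : α * p i a i < 1 :=
    mul_lt_one_of_sum_le_one (fun j _ => hp i a j) (hsum i a).le hα0 hα1 (mem_univ i)
  have hfactor : 1 - w + w * α ≤ α := by nlinarith
  exact (Hw_contracts_faster_than_alpha_general r hp (fun i a => (hsum i a).le) hα0 hself
    (zero_le_one.trans hw1) hw P Q).trans (mul_le_mul_of_nonneg_right hfactor (supNorm_nonneg _))
end
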